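/- The pair (u, p) of the Stokes flow past a sphere satisfies the homogeneous Stokes momentum equation away from the origin: for every x ∈ ℝ³ with x ≠ 0 and each component i = 1, 2, 3, ν·(∂²uᵢ/∂x₁²(x) + ∂²uᵢ/∂x₂²(x) + ∂²uᵢ/∂x₃²(x)) = ∂p/∂xᵢ(x); that is, −ν Δu + ∇p = 0 on ℝ³ ∖ {0}. -/

import Mathlib

/-- The velocity field of the analytical Stokes flow past a sphere of radius `R` in a
uniform stream of speed `v∞` (Cartesian form). -/
noncomputable def stokesSphereVelocity (R v : ℝ) (x : EuclideanSpace ℝ (Fin 3)) :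
    EuclideanSpace ℝ (Fin 3) :=
  v • EuclideanSpace.single (0 : Fin 3) (1 : ℝ) -
    (3 * R * v / 4) • ((1 / ‖x‖) • EuclideanSpace.single (0 : Fin 3) (1 : ℝ) +
      (x 0 / ‖x‖ ^ 3) • x) -
    (R ^ 3 * v / 4) • ((1 / ‖x‖ ^ 3) • EuclideanSpace.single (0 : Fin 3) (1 : ℝ) -
      (3 * x 0 / ‖x‖ ^ 5) • x)

/-- The pressure field of the analytical Stokes flow past a sphere of radius `R` in a
uniform stream of speed `v∞`, kinematic viscosity `ν` and far-field pressure `pinf`. -/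
noncomputable def stokesSpherePressure (R ν v pinf : ℝ) (x : EuclideanSpace ℝ (Fin 3)) : ℝ :=
  pinf - (3 * ν * R * v / 2) * x 0 / ‖x‖ ^ 3

/-!
In dimension `d`, `Δ (‖x‖ ^ s • q x) = s (s + d - 2 + 2 m) ‖x‖ ^ (s - 2) • q x + ‖x‖ ^ s • Δ q x`
when `q` is homogeneous of degree `m`. Applied to `q x = a` and `q x = ⟪a, x⟫ • x`, this shows that
the source doublet `D`, which is the gradient of `‖x‖ ^ (-d) * ⟪a, x⟫`, is harmonic and that the
Stokeslet `S` satisfies `Δ S = 2 D`. The velocity is a constant minus `3 R v / 4` times `S` minus a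
multiple of `D`, and the pressure is a constant minus `3 ν R v / 2` times the potential of `D`.
-/

open InnerProductSpace Laplacian Gradient Module Topology
open scoped RealInnerProductSpace

section Laplacian

variable {E F : Type*} [NormedAddCommGroup E] [InnerProductSpace ℝ E]
  [NormedAddCommGroup F] [NormedSpace ℝ F] {f : E → F} {g : E → ℝ} {x : E}

theorem differentiableAt_fderiv_apply (hf : ContDiffAt ℝ 2 f x) (v : E) :
    DifferentiableAt ℝ (fun y ↦ fderiv ℝ f y v) x :=
  ((hf.fderiv_right (m := 1) le_rfl).differentiableAt one_ne_zero).clm_apply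
    (differentiableAt_const v)

theorem fderiv_fderiv_smul_apply (hg : ContDiffAt ℝ 2 g x) (hf : ContDiffAt ℝ 2 f x) (v : E) :
    fderiv ℝ (fun y ↦ fderiv ℝ (fun z ↦ g z • f z) y v) x v =
      fderiv ℝ (fun y ↦ fderiv ℝ g y v) x v • f x + (2 : ℝ) • fderiv ℝ g x v • fderiv ℝ f x v +
        g x • fderiv ℝ (fun y ↦ fderiv ℝ f y v) x v := by
  have hfirst : (fun y ↦ fderiv ℝ (fun z ↦ g z • f z) y v) =ᶠ[𝓝 x]
      fun y ↦ g y • fderiv ℝ f y v + fderiv ℝ g y v • f y := by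
    filter_upwards [hg.eventually (by simp), hf.eventually (by simp)] with y hgy hfy
    simp [fderiv_fun_smul (hgy.differentiableAt two_ne_zero) (hfy.differentiableAt two_ne_zero)]
  have hg₁ := hg.differentiableAt two_ne_zero
  have hf₁ := hf.differentiableAt two_ne_zero
  have hg₂ := differentiableAt_fderiv_apply hg v
  have hf₂ := differentiableAt_fderiv_apply hf v
  rw [hfirst.fderiv_eq, fderiv_fun_add (hg₁.fun_smul hf₂) (hg₂.fun_smul hf₁),
    fderiv_fun_smul hg₁ hf₂, fderiv_fun_smul hg₂ hf₁]
  simp only [add_apply, smul_apply, ContinuousLinearMap.smulRight_apply]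
  module

variable [FiniteDimensional ℝ E]

theorem laplacian_eq_sum_fderiv_fderiv {ι : Type*} [Fintype ι] (b : OrthonormalBasis ι ℝ E)
    (hf : ContDiffAt ℝ 2 f x) :
    Δ f x = ∑ i, fderiv ℝ (fun y ↦ fderiv ℝ f y (b i)) x (b i) := by
  have hf' : DifferentiableAt ℝ (fderiv ℝ f) x :=
    (hf.fderiv_right (m := 1) le_rfl).differentiableAt one_ne_zero
  simp [laplacian_eq_iteratedFDeriv_orthonormalBasis f b, iteratedFDeriv_two_apply,
    fderiv_clm_apply hf' (differentiableAt_const _)]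

theorem laplacian_clm (L : E →L[ℝ] F) : Δ (L : E → F) x = 0 := by
  have hL : fderiv ℝ (L : E → F) = fun _ ↦ L := funext fun _ ↦ L.fderiv
  simp [laplacian_eq_iteratedFDeriv_stdOrthonormalBasis, iteratedFDeriv_two_apply, hL]

theorem laplacian_fun_smul (hg : ContDiffAt ℝ 2 g x) (hf : ContDiffAt ℝ 2 f x) :
    Δ (fun y ↦ g y • f y) x =
      Δ g x • f x + (2 : ℝ) • fderiv ℝ f x (∇ g x) + g x • Δ f x := by
  let b := stdOrthonormalBasis ℝ E
  have hcross : ∑ i, fderiv ℝ g x (b i) • fderiv ℝ f x (b i) = fderiv ℝ f x (∇ g x) := by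
    simp_rw [← inner_gradient_left, ← map_smul, ← map_sum, real_inner_comm (b _), b.sum_repr']
  rw [laplacian_eq_sum_fderiv_fderiv b (f := fun y ↦ g y • f y) (hg.smul hf),
    laplacian_eq_sum_fderiv_fderiv b hg, laplacian_eq_sum_fderiv_fderiv b hf, ← hcross]
  simp only [fderiv_fderiv_smul_apply hg hf, Finset.sum_add_distrib, Finset.smul_sum,
    Finset.sum_smul]

theorem laplacian_eq_trace_of_hasGradientAt {G : E → E} {G' : E →L[ℝ] E}
    (hg : ∀ᶠ y in 𝓝 x, HasGradientAt g (G y) y) (hG : HasFDerivAt G G' x) :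
    Δ g x = LinearMap.trace ℝ E G' := by
  let b := stdOrthonormalBasis ℝ E
  have hfderiv : fderiv ℝ g =ᶠ[𝓝 x] fun y ↦ innerSL ℝ (G y) :=
    hg.mono fun y hy ↦ hy.hasFDerivAt.fderiv
  have hfderiv' : fderiv ℝ (fderiv ℝ g) x = (innerSL ℝ).comp G' :=
    hfderiv.fderiv_eq.trans ((innerSL ℝ).hasFDerivAt.comp x hG).fderiv
  simp [laplacian_eq_iteratedFDeriv_orthonormalBasis g b, iteratedFDeriv_two_apply, hfderiv',
    LinearMap.trace_eq_sum_inner _ b, real_inner_comm]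

theorem laplacian_apply_eq_sum_fderiv_fderiv {ι κ : Type*} [Fintype ι] [DecidableEq ι] [Fintype κ]
    {u : EuclideanSpace ℝ ι → EuclideanSpace ℝ κ} {x : EuclideanSpace ℝ ι}
    (hu : ContDiffAt ℝ 2 u x) (k : κ) :
    Δ u x k = ∑ i, fderiv ℝ (fun y ↦ fderiv ℝ (fun z ↦ u z k) y (EuclideanSpace.single i 1)) x
      (EuclideanSpace.single i 1) := by
  let coord : EuclideanSpace ℝ κ →L[ℝ] ℝ := EuclideanSpace.proj k
  have hcomm : Δ (coord ∘ u) x = Δ u x k := hu.laplacian_CLM_comp_left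
  have hsum := laplacian_eq_sum_fderiv_fderiv (EuclideanSpace.basisFun ι ℝ)
    (coord.contDiff.contDiffAt.comp x hu)
  simp only [EuclideanSpace.basisFun_apply] at hsum
  exact hcomm.symm.trans hsum

end Laplacian

section PowerOfNorm

variable {E F : Type*} [NormedAddCommGroup E] [InnerProductSpace ℝ E]
  [NormedAddCommGroup F] [NormedSpace ℝ F] {x : E}

theorem contDiffAt_norm_rpow (hx : x ≠ 0) (s : ℝ) {n : WithTop ℕ∞} :
    ContDiffAt ℝ n (fun y : E ↦ ‖y‖ ^ s) x :=
  (contDiffAt_norm ℝ hx).rpow_const_of_ne (norm_ne_zero_iff.mpr hx)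

theorem hasGradientAt_norm_rpow [CompleteSpace E] (hx : x ≠ 0) (s : ℝ) :
    HasGradientAt (fun y : E ↦ ‖y‖ ^ s) ((s * ‖x‖ ^ (s - 2)) • x) x := by
  have hsq_rpow (t : ℝ) (y : E) : (‖y‖ ^ 2) ^ t = ‖y‖ ^ (2 * t) := by
    exact_mod_cast (Real.rpow_mul (norm_nonneg y) 2 t).symm
  have hsq : HasFDerivAt (fun y : E ↦ (‖y‖ ^ 2) ^ (s / 2)) _ x :=
    (hasStrictFDerivAt_norm_sq x).hasFDerivAt.rpow_const (.inl (by positivity))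
  simp only [hsq_rpow, mul_sub, mul_div_cancel₀ s two_ne_zero, mul_one] at hsq
  rw [hasGradientAt_iff_hasFDerivAt]
  refine hsq.congr_fderiv ?_
  ext v
  simp only [smul_apply, coe_innerSL_apply, nsmul_eq_mul, Nat.cast_ofNat, smul_eq_mul, map_smul,
    toDual_apply_apply]
  ring

theorem hasGradientAt_norm_rpow_mul_inner [CompleteSpace E] (hx : x ≠ 0) (s : ℝ) (a : E) :
    HasGradientAt (fun y : E ↦ ‖y‖ ^ s * ⟪a, y⟫)
      (‖x‖ ^ s • a + (s * ‖x‖ ^ (s - 2)) • ⟪a, x⟫ • x) x := by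
  rw [hasGradientAt_iff_hasFDerivAt]
  refine ((hasGradientAt_norm_rpow hx s).hasFDerivAt.mul
    (innerSL ℝ a).hasFDerivAt).congr_fderiv ?_
  ext v
  simp only [coe_innerSL_apply, map_add, map_smul, add_apply, smul_apply, smul_eq_mul,
    toDual_apply_apply]
  ring

variable [FiniteDimensional ℝ E]

theorem laplacian_norm_rpow (hx : x ≠ 0) (s : ℝ) :
    Δ (fun y : E ↦ ‖y‖ ^ s) x = s * (s + finrank ℝ E - 2) * ‖x‖ ^ (s - 2) := by
  have hgrad := ((hasGradientAt_norm_rpow hx (s - 2)).hasFDerivAt.const_mul s).fun_smul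
    (hasFDerivAt_id x)
  have hpow : ‖x‖ ^ (s - 2 - 2) * ‖x‖ ^ 2 = ‖x‖ ^ (s - 2) := by
    rw [← Real.rpow_add_natCast (norm_ne_zero_iff.mpr hx), Nat.cast_two, sub_add_cancel]
  rw [laplacian_eq_trace_of_hasGradientAt
    ((eventually_ne_nhds hx).mono fun y hy ↦ hasGradientAt_norm_rpow hy s) hgrad]
  simp only [map_smul, id_eq, ContinuousLinearMap.toLinearMap_add,
    ContinuousLinearMap.toLinearMap_smul, ContinuousLinearMap.coe_id,
    ContinuousLinearMap.coe_smulRight, map_add, LinearMap.trace_id, smul_eq_mul,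
    LinearMap.trace_smulRight, LinearMap.smul_apply, ContinuousLinearMap.coe_coe,
    toDual_apply_apply, real_inner_self_eq_norm_sq]
  linear_combination s * (s - 2) * hpow

-- `hhom` is Euler's identity for `q` homogeneous of degree `m`.
theorem laplacian_norm_rpow_smul {q : E → F} {m : ℝ} (hx : x ≠ 0) (s : ℝ)
    (hq : ContDiffAt ℝ 2 q x) (hhom : fderiv ℝ q x x = m • q x) :
    Δ (fun y ↦ ‖y‖ ^ s • q y) x =
      (s * (s + finrank ℝ E - 2 + 2 * m) * ‖x‖ ^ (s - 2)) • q x + ‖x‖ ^ s • Δ q x := by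
  rw [laplacian_fun_smul (contDiffAt_norm_rpow hx s) hq, laplacian_norm_rpow hx,
    (hasGradientAt_norm_rpow hx s).gradient, map_smul, hhom]
  module

theorem laplacian_norm_rpow_smul_const (hx : x ≠ 0) (s : ℝ) (c : F) :
    Δ (fun y : E ↦ ‖y‖ ^ s • c) x = (s * (s + finrank ℝ E - 2) * ‖x‖ ^ (s - 2)) • c := by
  have h := laplacian_norm_rpow_smul (q := fun _ ↦ c) (m := 0) hx s contDiffAt_const (by simp)
  simpa using h

end PowerOfNorm

section InnerSMulSelf

variable {E : Type*} [NormedAddCommGroup E] [InnerProductSpace ℝ E]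

theorem contDiff_inner_smul_self (a : E) {n : WithTop ℕ∞} :
    ContDiff ℝ n (fun y : E ↦ ⟪a, y⟫ • y) :=
  (innerSL ℝ a).contDiff.smul contDiff_id

theorem fderiv_inner_smul_self_apply_self (a x : E) :
    fderiv ℝ (fun y : E ↦ ⟪a, y⟫ • y) x x = (2 : ℝ) • ⟪a, x⟫ • x := by
  have h : HasFDerivAt (fun y : E ↦ ⟪a, y⟫ • y) _ x :=
    (innerSL ℝ a).hasFDerivAt.fun_smul (hasFDerivAt_id x)
  simp [h.fderiv, two_smul]

variable [FiniteDimensional ℝ E]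

theorem laplacian_inner_smul_self (a x : E) : Δ (fun y : E ↦ ⟪a, y⟫ • y) x = (2 : ℝ) • a := by
  have hgrad : ∇ (innerSL ℝ a) x = a := ((toDual ℝ E).symm_apply_eq).mpr (innerSL ℝ a).fderiv
  have h := laplacian_fun_smul (innerSL ℝ a).contDiff.contDiffAt
    (ContinuousLinearMap.id ℝ E).contDiff.contDiffAt (x := x)
  rw [laplacian_clm, laplacian_clm, hgrad] at h
  simpa using h

theorem laplacian_norm_rpow_smul_inner_smul_self {x : E} (hx : x ≠ 0) (s : ℝ) (a : E) :
    Δ (fun y : E ↦ ‖y‖ ^ s • ⟪a, y⟫ • y) x =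
      (s * (s + finrank ℝ E + 2) * ‖x‖ ^ (s - 2)) • ⟪a, x⟫ • x + (2 * ‖x‖ ^ s) • a := by
  rw [laplacian_norm_rpow_smul hx s (contDiff_inner_smul_self a).contDiffAt
    (fderiv_inner_smul_self_apply_self a x), laplacian_inner_smul_self]
  module

end InnerSMulSelf

section FundamentalSolutions

variable {E : Type*} [NormedAddCommGroup E] [InnerProductSpace ℝ E]

/-- The velocity of the potential source doublet of strength `a` at the origin of a
`d`-dimensional space, `a / r ^ d - d ⟪a, x⟫ x / r ^ (d + 2)`, without the customary normalising
constant. -/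
noncomputable def sourceDoublet (a x : E) : E :=
  ‖x‖ ^ (-finrank ℝ E : ℝ) • a -
    (finrank ℝ E * ‖x‖ ^ (-finrank ℝ E - 2 : ℝ)) • ⟪a, x⟫ • x

/-- The Stokeslet, the velocity of the fundamental solution of the Stokes equations for a point
force along `a` at the origin of a `d`-dimensional space, without the customary normalising
constant. For `d = 2` the inverse `(d - 2)⁻¹` is `0`, and the logarithmic term of the planar
Stokeslet is missing. -/
noncomputable def stokeslet (a x : E) : E :=
  (finrank ℝ E - 2 : ℝ)⁻¹ • ‖x‖ ^ (2 - finrank ℝ E : ℝ) • a +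
    ‖x‖ ^ (-finrank ℝ E : ℝ) • ⟪a, x⟫ • x

variable {x : E}

theorem contDiffAt_sourceDoublet (hx : x ≠ 0) (a : E) {n : WithTop ℕ∞} :
    ContDiffAt ℝ n (sourceDoublet a) x :=
  ((contDiffAt_norm_rpow hx _).smul contDiffAt_const).sub
    ((contDiffAt_const.mul (contDiffAt_norm_rpow hx _)).smul
      (contDiff_inner_smul_self a).contDiffAt)

theorem contDiffAt_stokeslet (hx : x ≠ 0) (a : E) {n : WithTop ℕ∞} :
    ContDiffAt ℝ n (stokeslet a) x :=
  (contDiffAt_const.smul ((contDiffAt_norm_rpow hx _).smul contDiffAt_const)).add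
    ((contDiffAt_norm_rpow hx _).smul (contDiff_inner_smul_self a).contDiffAt)

theorem hasGradientAt_sourceDoublet_potential [CompleteSpace E] (hx : x ≠ 0) (a : E) :
    HasGradientAt (fun y : E ↦ ‖y‖ ^ (-finrank ℝ E : ℝ) * ⟪a, y⟫) (sourceDoublet a x) x := by
  convert hasGradientAt_norm_rpow_mul_inner hx (-finrank ℝ E : ℝ) a using 1
  rw [sourceDoublet]
  module

variable [FiniteDimensional ℝ E]

theorem laplacian_sourceDoublet (hx : x ≠ 0) (a : E) : Δ (sourceDoublet a) x = 0 := by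
  let d : ℝ := finrank ℝ E
  have hsplit : sourceDoublet a =
      (fun y ↦ ‖y‖ ^ (-d) • a) - d • fun y ↦ ‖y‖ ^ (-d - 2) • ⟪a, y⟫ • y := by
    ext y
    simp [sourceDoublet, mul_smul, d]
  have hconst : ContDiffAt ℝ 2 (fun y : E ↦ ‖y‖ ^ (-d) • a) x :=
    (contDiffAt_norm_rpow hx _).smul contDiffAt_const
  have hdyad : ContDiffAt ℝ 2 (fun y : E ↦ ‖y‖ ^ (-d - 2) • ⟪a, y⟫ • y) x :=
    (contDiffAt_norm_rpow hx _).smul (contDiff_inner_smul_self a).contDiffAt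
  have hdyad' : ContDiffAt ℝ 2 (d • fun y : E ↦ ‖y‖ ^ (-d - 2) • ⟪a, y⟫ • y) x :=
    hdyad.const_smul d
  rw [hsplit, hconst.laplacian_sub hdyad', laplacian_smul d hdyad,
    laplacian_norm_rpow_smul_const hx, laplacian_norm_rpow_smul_inner_smul_self hx]
  module

theorem laplacian_stokeslet (hx : x ≠ 0) (a : E) :
    Δ (stokeslet a) x = (2 : ℝ) • sourceDoublet a x := by
  let d : ℝ := finrank ℝ E
  have hsplit : stokeslet a =
      ((d - 2)⁻¹ • fun y ↦ ‖y‖ ^ (2 - d) • a) + fun y ↦ ‖y‖ ^ (-d) • ⟪a, y⟫ • y := rfl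
  have hconst : ContDiffAt ℝ 2 (fun y : E ↦ ‖y‖ ^ (2 - d) • a) x :=
    (contDiffAt_norm_rpow hx _).smul contDiffAt_const
  have hconst' : ContDiffAt ℝ 2 ((d - 2)⁻¹ • fun y : E ↦ ‖y‖ ^ (2 - d) • a) x :=
    hconst.const_smul _
  have hdyad : ContDiffAt ℝ 2 (fun y : E ↦ ‖y‖ ^ (-d) • ⟪a, y⟫ • y) x :=
    (contDiffAt_norm_rpow hx _).smul (contDiff_inner_smul_self a).contDiffAt
  rw [hsplit, hconst'.laplacian_add hdyad, laplacian_smul _ hconst,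
    laplacian_norm_rpow_smul_const hx, laplacian_norm_rpow_smul_inner_smul_self hx, sourceDoublet]
  module

end FundamentalSolutions

section Sphere

local notation "e₁" => (EuclideanSpace.single 0 1 : EuclideanSpace ℝ (Fin 3))

variable {x : EuclideanSpace ℝ (Fin 3)}

theorem stokesSphereVelocity_eq (R v : ℝ) :
    stokesSphereVelocity R v = (fun _ ↦ v • e₁) - (3 * R * v / 4) • stokeslet e₁ -
      (R ^ 3 * v / 4) • sourceDoublet e₁ := by
  ext y i
  have hneg {s : ℝ} (n : ℕ) (hs : s = -n) : ‖y‖ ^ s = (‖y‖ ^ n)⁻¹ := by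
    rw [hs, Real.rpow_neg (norm_nonneg y), Real.rpow_natCast]
  have h₁ : ‖y‖ ^ (2 - 3 : ℝ) = (‖y‖ ^ 1)⁻¹ := hneg 1 (by norm_num)
  have h₃ : ‖y‖ ^ (-3 : ℝ) = (‖y‖ ^ 3)⁻¹ := hneg 3 (by norm_num)
  have h₅ : ‖y‖ ^ (-3 - 2 : ℝ) = (‖y‖ ^ 5)⁻¹ := hneg 5 (by norm_num)
  simp only [stokesSphereVelocity, stokeslet, sourceDoublet, Pi.sub_apply, Pi.smul_apply,
    PiLp.sub_apply, PiLp.add_apply, PiLp.smul_apply, smul_eq_mul, finrank_euclideanSpace_fin,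
    Nat.cast_ofNat, h₁, h₃, h₅, EuclideanSpace.inner_single_left, map_one, one_mul]
  ring

theorem stokesSpherePressure_eq (R ν v pinf : ℝ) :
    stokesSpherePressure R ν v pinf = fun y ↦ pinf - (3 * ν * R * v / 2) *
      (‖y‖ ^ (-finrank ℝ (EuclideanSpace ℝ (Fin 3)) : ℝ) * ⟪e₁, y⟫) := by
  ext y
  rw [stokesSpherePressure, finrank_euclideanSpace_fin, Real.rpow_neg (norm_nonneg y),
    Real.rpow_natCast, EuclideanSpace.inner_single_left]
  simp only [map_one, one_mul]
  ring

theorem contDiffAt_stokesSphereVelocity (hx : x ≠ 0) (R v : ℝ) {n : WithTop ℕ∞} :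
    ContDiffAt ℝ n (stokesSphereVelocity R v) x :=
  stokesSphereVelocity_eq R v ▸
    (contDiffAt_const.sub (contDiffAt_const.smul (contDiffAt_stokeslet hx _))).sub
      (contDiffAt_const.smul (contDiffAt_sourceDoublet hx _))

theorem laplacian_stokesSphereVelocity (hx : x ≠ 0) (R v : ℝ) :
    Δ (stokesSphereVelocity R v) x = -(3 * R * v / 2) • sourceDoublet e₁ x := by
  have hstream : ContDiffAt ℝ 2 (fun _ ↦ v • e₁) x := contDiffAt_const
  have hS : ContDiffAt ℝ 2 (stokeslet e₁) x := contDiffAt_stokeslet hx e₁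
  have hD : ContDiffAt ℝ 2 (sourceDoublet e₁) x := contDiffAt_sourceDoublet hx e₁
  have hS' : ContDiffAt ℝ 2 ((3 * R * v / 4) • stokeslet e₁) x := hS.const_smul (3 * R * v / 4)
  have hD' : ContDiffAt ℝ 2 ((R ^ 3 * v / 4) • sourceDoublet e₁) x := hD.const_smul (R ^ 3 * v / 4)
  have hstreamS : ContDiffAt ℝ 2 ((fun _ ↦ v • e₁) - (3 * R * v / 4) • stokeslet e₁) x :=
    hstream.sub hS'
  rw [stokesSphereVelocity_eq, hstreamS.laplacian_sub hD', hstream.laplacian_sub hS',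
    laplacian_smul _ hS, laplacian_smul _ hD, laplacian_const, laplacian_stokeslet hx,
    laplacian_sourceDoublet hx]
  simp only [Pi.zero_apply]
  module

theorem hasGradientAt_stokesSpherePressure (hx : x ≠ 0) (R ν v pinf : ℝ) :
    HasGradientAt (stokesSpherePressure R ν v pinf)
      (-(3 * ν * R * v / 2) • sourceDoublet e₁ x) x := by
  rw [hasGradientAt_iff_hasFDerivAt, stokesSpherePressure_eq]
  refine (((hasGradientAt_sourceDoublet_potential hx e₁).hasFDerivAt.const_mul _).const_sub
    _).congr_fderiv ?_
  simp

end Sphere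

/-- The pair `(u, p)` of the Stokes flow past a sphere satisfies the homogeneous Stokes
momentum equation away from the origin: `−ν Δu + ∇p = 0` on `ℝ³ ∖ {0}`, i.e. for each
component `i` and each `x ≠ 0`, `ν·Δuᵢ(x) = ∂p/∂xᵢ(x)`. -/
theorem stokesSphere_momentum (R ν v pinf : ℝ) (hR : 0 < R) (hν : 0 < ν)
    (x : EuclideanSpace ℝ (Fin 3)) (hx : x ≠ 0) (i : Fin 3) :
    ν * (fderiv ℝ (fun y => fderiv ℝ (fun z => stokesSphereVelocity R v z i) y
          (EuclideanSpace.single 0 1)) x (EuclideanSpace.single 0 1) +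
        fderiv ℝ (fun y => fderiv ℝ (fun z => stokesSphereVelocity R v z i) y
          (EuclideanSpace.single 1 1)) x (EuclideanSpace.single 1 1) +
        fderiv ℝ (fun y => fderiv ℝ (fun z => stokesSphereVelocity R v z i) y
          (EuclideanSpace.single 2 1)) x (EuclideanSpace.single 2 1)) =
      fderiv ℝ (stokesSpherePressure R ν v pinf) x (EuclideanSpace.single i 1) := by
  have hlap := laplacian_apply_eq_sum_fderiv_fderiv (contDiffAt_stokesSphereVelocity hx R v) i
  rw [Fin.sum_univ_three, laplacian_stokesSphereVelocity hx] at hlap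
  rw [← hlap, (hasGradientAt_stokesSpherePressure hx R ν v pinf).fderiv_apply,
    EuclideanSpace.inner_single_right]
  simp only [neg_smul, PiLp.neg_apply, PiLp.smul_apply, smul_eq_mul, one_mul,
    conj_trivial]
  ring
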